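/- Let R₀ be a finitely generated integral domain possessing infinitely many pairwise non-associate prime elements, let R = R₀[s,t] be the polynomial ring in two variables over R₀, let F be the field of fractions of R, and let S be a subring of F containing R which is finitely generated as an R-algebra. Then for every subset L of SL₂(S) which generates SL₂(S), the set of elements of L not belonging to E₂(S) is infinite. -/

import Mathlib

/-!
If all but finitely many elements of `L` lie in `E₂(S)`, then `SL₂(S) ≤ E₂(R[1/f])` for a single
nonzero `f ∈ R = R₀[s, t]`: the ring `S` is finitely generated, and each of the finitely many
exceptional matrices is a product of elementary matrices over `F`, so one common denominator `f`
suffices. It remains to find, for each `f ≠ 0`, a matrix in `SL₂(R)` outside `E₂(R[1/f])`.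

Let `f₀ ∈ R₀[t]` be the leading coefficient of `f` in the variable `s`. As `R₀` is infinite, there
is `c` with `f₀(c) ≠ 0`, and as `R₀` is Noetherian, some prime `p` in the given infinite family does
not divide `f₀(c)`. The matrix is `1 + s [[-ab, a²], [-b², ab]]` with `a = p` and `b = t - c`. Let
`O` be the localization of `R₀[s⁻¹, t]` at the prime `(s⁻¹, p, t - c)` and `ϖ = s⁻¹`. Then
`R[1/f] ⊆ O[1/ϖ]`, and `A = O/ϖ` is the localization of `R₀[t]` at `(p, t - c)`, a local domain in
which neither of `a`, `b` divides the other.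

The group `E₂(O[1/ϖ])` acts on the Bruhat–Tits tree of `ϖ` and preserves the subtree spanned by the
translates of the standard edge. Concretely, with `D = [[0, 1], [ϖ, 0]]`, each of its elements is, up
to a power of `ϖ`, either in `SL₂(O)` or a reduced word `k₀ D k₁ D ⋯ D kₘ` with `m ≥ 1`, where
`k₁, …, kₘ₋₁ ∈ SL₂(O)` are not upper triangular modulo `ϖ`. Since `D ≡ e₁ e₂ᵀ` modulo `ϖ`, such a
word reduces modulo `ϖ` to a nonzero matrix whose columns are multiples of the first column of `k₀`,
a unimodular vector (`dvd_or_dvd_of_mem_E2`). For the matrix above the leading matrix has columns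
proportional to `(a, b)`; over the local ring `A` this would force `a ∣ b` or `b ∣ a`.
-/

open Matrix Pointwise

noncomputable section

/-- `SL₂` over a commutative ring. -/
abbrev SL2 (A : Type*) [CommRing A] := Matrix.SpecialLinearGroup (Fin 2) A

/-- The elementary matrix `E₁₂(r) = [[1, r], [0, 1]]`. -/
def E12 {A : Type*} [CommRing A] (r : A) : SL2 A :=
  ⟨!![1, r; 0, 1], by simp [Matrix.det_fin_two_of]⟩

/-- The elementary matrix `E₂₁(r) = [[1, 0], [r, 1]]`. -/
def E21 {A : Type*} [CommRing A] (r : A) : SL2 A :=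
  ⟨!![1, 0; r, 1], by simp [Matrix.det_fin_two_of]⟩

/-- `SL₂(S)` identified with the subgroup of `SL₂(F)` of matrices with entries in the
subring `S` of the field `F` (the image of `SL₂(S) → SL₂(F)`). -/
def SL2In {F : Type*} [Field F] (S : Subring F) : Subgroup (SL2 F) :=
  (Matrix.SpecialLinearGroup.map S.subtype).range

/-- `E₂(S)`: the subgroup of `SL₂(F)` generated by the elementary matrices with
entry in the subring `S`. -/
def E2 {F : Type*} [Field F] (S : Subring F) : Subgroup (SL2 F) :=
  Subgroup.closure {g | ∃ r ∈ S, g = E12 r ∨ g = E21 r}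

/-- The set `D(1/π,1)·Γ·D(π,1)` of conjugates inside `SL₂(F)`. -/
def conjSet {F : Type*} [Field F] (π : F) (Γ : Subgroup (SL2 F)) : Set (SL2 F) :=
  {g | ∃ h ∈ Γ, (g : Matrix (Fin 2) (Fin 2) F) =
    !![π⁻¹, 0; 0, 1] * (h : Matrix (Fin 2) (Fin 2) F) * !![π, 0; 0, 1]}

/-! ### Reduced words over a ring with a prime element -/

section ReducedWords

variable {O A F : Type*} [CommRing O] [CommRing A] [Field F]

/-- The matrix `[[0, 1], [ϖ, 0]]`. Its square is the scalar `ϖ`, and it normalizes the group of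
determinant-one matrices that are upper triangular modulo `ϖ`. -/
def swapMat (ϖ : O) : Matrix (Fin 2) (Fin 2) O := !![0, 1; ϖ, 0]

/-- Words `k₁ D k₂ D ⋯ D kₘ` with `D = swapMat ϖ`, all `kᵢ` of determinant one, and all `kᵢ`
other than the last one not upper triangular modulo `ker ρ`. -/
inductive ReducedTail (ρ : O →+* A) (ϖ : O) : Matrix (Fin 2) (Fin 2) O → Prop
  | base (k : Matrix (Fin 2) (Fin 2) O) : k.det = 1 → ReducedTail ρ ϖ k
  | step (k h : Matrix (Fin 2) (Fin 2) O) : k.det = 1 → ρ (k 1 0) ≠ 0 → ReducedTail ρ ϖ h →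
      ReducedTail ρ ϖ (k * swapMat ϖ * h)

/-- Normal forms for products of determinant-one matrices and `swapMat ϖ`: a single
determinant-one matrix, or `k D h` with `k` an arbitrary determinant-one matrix and `h` a
reduced tail. -/
def ReducedWord (ρ : O →+* A) (ϖ : O) (m : Matrix (Fin 2) (Fin 2) O) : Prop :=
  m.det = 1 ∨ ∃ k h, k.det = 1 ∧ ReducedTail ρ ϖ h ∧ m = k * swapMat ϖ * h

lemma ReducedTail.reducedWord {ρ : O →+* A} {ϖ : O} {h : Matrix (Fin 2) (Fin 2) O}
    (hh : ReducedTail ρ ϖ h) : ReducedWord ρ ϖ h := by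
  cases hh with
  | base _ hk => exact Or.inl hk
  | step k h hk _ hh => exact Or.inr ⟨k, h, hk, hh, rfl⟩

lemma ReducedWord.mul_left {ρ : O →+* A} {ϖ : O} {k m : Matrix (Fin 2) (Fin 2) O}
    (hk : k.det = 1) (hm : ReducedWord ρ ϖ m) : ReducedWord ρ ϖ (k * m) := by
  rcases hm with hm | ⟨k', h, hk', hh, rfl⟩
  · exact Or.inl (by rw [Matrix.det_mul, hk, hm, one_mul])
  · exact Or.inr ⟨k * k', h, by rw [Matrix.det_mul, hk, hk', one_mul], hh, by
      simp only [Matrix.mul_assoc]⟩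

/-- Multiplying a normal form by `swapMat ϖ` gives a normal form, up to the scalar `ϖ` that
appears when `D k D` collapses because `k` is upper triangular modulo `ϖ`. -/
lemma ReducedWord.swapMat_mul {ρ : O →+* A} {ϖ : O} (hker : ∀ x, ρ x = 0 → ∃ y, x = ϖ * y)
    {m : Matrix (Fin 2) (Fin 2) O} (hm : ReducedWord ρ ϖ m) :
    ∃ m', ReducedWord ρ ϖ m' ∧ (swapMat ϖ * m = m' ∨ swapMat ϖ * m = ϖ • m') := by
  rcases hm with hm | ⟨k, h, hk, hh, rfl⟩
  · exact ⟨_, Or.inr ⟨1, m, by simp, ReducedTail.base _ hm, by rw [one_mul]⟩, Or.inl rfl⟩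
  · by_cases h10 : ρ (k 1 0) = 0
    · obtain ⟨y, hy⟩ := hker _ h10
      have hdet : (!![k 1 1, y; ϖ * k 0 1, k 0 0] : Matrix (Fin 2) (Fin 2) O).det = 1 := by
        rw [Matrix.det_fin_two, hy] at hk
        rw [Matrix.det_fin_two_of]
        linear_combination hk
      have hcollapse : swapMat ϖ * k * swapMat ϖ
          = ϖ • (!![k 1 1, y; ϖ * k 0 1, k 0 0] : Matrix (Fin 2) (Fin 2) O) := by
        have hk' : k = !![k 0 0, k 0 1; ϖ * y, k 1 1] := by
          rw [← hy]; exact Matrix.eta_fin_two k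
        have gen : ∀ p q d : O, swapMat ϖ * !![p, q; ϖ * y, d] * swapMat ϖ
            = ϖ • (!![d, y; ϖ * q, p] : Matrix (Fin 2) (Fin 2) O) := fun p q d => by
          simp [swapMat, mul_comm]
        rw [← gen, ← hk']
      refine ⟨_, hh.reducedWord.mul_left hdet, Or.inr ?_⟩
      rw [← Matrix.smul_mul, ← hcollapse]
      simp only [Matrix.mul_assoc]
    · exact ⟨_, Or.inr ⟨1, _, by simp, ReducedTail.step k h hk h10 hh, by rw [one_mul]⟩,
        Or.inl rfl⟩

lemma ReducedTail.exists_ne_zero [IsDomain A] {ρ : O →+* A} {ϖ : O} (hϖ : ρ ϖ = 0)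
    {h : Matrix (Fin 2) (Fin 2) O} (hh : ReducedTail ρ ϖ h) : ∃ j, ρ (h 1 j) ≠ 0 := by
  induction hh with
  | base k hk =>
    by_contra! hcon
    have := congrArg ρ hk
    rw [Matrix.det_fin_two] at this
    simp [hcon] at this
  | step k h hk h10 hh ih =>
    obtain ⟨j, hj⟩ := ih
    refine ⟨j, ?_⟩
    have : ρ ((k * swapMat ϖ * h) 1 j) = ρ (k 1 0) * ρ (h 1 j) := by
      simp [swapMat, Matrix.mul_apply, Fin.sum_univ_two, hϖ]
    rw [this]
    exact mul_ne_zero h10 hj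

/-- Matrices over `F` that are, up to powers of `ϖ`, normal forms over `O`. -/
def IsWordUpToScale (ρ : O →+* A) (ϖ : O) (φ : O →+* F) (g : Matrix (Fin 2) (Fin 2) F) : Prop :=
  ∃ (i j : ℕ) (m : Matrix (Fin 2) (Fin 2) O), ReducedWord ρ ϖ m ∧
    φ ϖ ^ i • g = φ ϖ ^ j • φ.mapMatrix m

variable {ρ : O →+* A} {ϖ : O} {φ : O →+* F} {g : Matrix (Fin 2) (Fin 2) F}

lemma IsWordUpToScale.mul_left {k : Matrix (Fin 2) (Fin 2) O} (hk : k.det = 1)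
    (hg : IsWordUpToScale ρ ϖ φ g) : IsWordUpToScale ρ ϖ φ (φ.mapMatrix k * g) := by
  obtain ⟨i, j, m, hm, h⟩ := hg
  refine ⟨i, j, k * m, hm.mul_left hk, ?_⟩
  rw [← Matrix.mul_smul, h, Matrix.mul_smul, map_mul]

lemma IsWordUpToScale.of_smul (hg : IsWordUpToScale ρ ϖ φ (φ ϖ • g)) :
    IsWordUpToScale ρ ϖ φ g := by
  obtain ⟨i, j, m, hm, h⟩ := hg
  exact ⟨i + 1, j, m, hm, by rw [pow_succ, mul_smul, h]⟩

lemma IsWordUpToScale.swapMat_mul (hker : ∀ x, ρ x = 0 → ∃ y, x = ϖ * y)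
    (hg : IsWordUpToScale ρ ϖ φ g) :
    IsWordUpToScale ρ ϖ φ (φ.mapMatrix (swapMat ϖ) * g) := by
  obtain ⟨i, j, m, hm, h⟩ := hg
  obtain ⟨m', hm', h' | h'⟩ := hm.swapMat_mul hker
  · refine ⟨i, j, m', hm', ?_⟩
    rw [← Matrix.mul_smul, h, Matrix.mul_smul, ← map_mul, h']
  · refine ⟨i, j + 1, m', hm', ?_⟩
    rw [← Matrix.mul_smul, h, Matrix.mul_smul, ← map_mul, h', pow_succ, mul_smul]
    congr 1
    ext a b
    simp

/-- Left multiplication by `E₁₂(r)`, where `r` has a pole of order at most `n` along `ϖ`: the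
order of the pole drops under conjugation by the product of `swapMat ϖ` and a Weyl element. -/
lemma IsWordUpToScale.E12_mul (hker : ∀ x, ρ x = 0 → ∃ y, x = ϖ * y) (n : ℕ) :
    ∀ (r : F) (g : Matrix (Fin 2) (Fin 2) F), (∃ x, φ ϖ ^ n * r = φ x) →
      IsWordUpToScale ρ ϖ φ g → IsWordUpToScale ρ ϖ φ (!![1, r; 0, 1] * g) := by
  induction n with
  | zero =>
    rintro r g ⟨x, hx⟩ hg
    have := hg.mul_left (k := !![1, x; 0, 1]) (by simp [Matrix.det_fin_two_of])
    convert this using 2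
    ext a b
    fin_cases a <;> fin_cases b <;> simp [← hx]
  | succ n ih =>
    rintro r g ⟨x, hx⟩ hg
    have h1 := (hg.swapMat_mul hker).mul_left (k := !![0, 1; -1, 0])
      (by simp [Matrix.det_fin_two_of])
    have h2 := ih (-(φ ϖ * r)) _ ⟨-x, by rw [map_neg, ← hx]; ring⟩ h1
    have h3 := (h2.mul_left (k := !![0, -1; 1, 0])
      (by simp [Matrix.det_fin_two_of])).swapMat_mul hker
    refine IsWordUpToScale.of_smul ?_
    convert h3 using 1
    simp only [← Matrix.mul_assoc, ← Matrix.smul_mul]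
    congr 1
    ext a b
    fin_cases a <;> fin_cases b <;>
      simp [swapMat, Matrix.mul_apply, Fin.sum_univ_two]

lemma IsWordUpToScale.E21_mul (hker : ∀ x, ρ x = 0 → ∃ y, x = ϖ * y) (n : ℕ)
    (r : F) (hr : ∃ x, φ ϖ ^ n * r = φ x)
    (hg : IsWordUpToScale ρ ϖ φ g) : IsWordUpToScale ρ ϖ φ (!![1, 0; r, 1] * g) := by
  obtain ⟨x, hx⟩ := hr
  have h1 := hg.mul_left (k := !![0, 1; -1, 0]) (by simp [Matrix.det_fin_two_of])
  have h2 := IsWordUpToScale.E12_mul hker n (-r) _ ⟨-x, by rw [map_neg, ← hx]; ring⟩ h1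
  have h3 := h2.mul_left (k := !![0, -1; 1, 0]) (by simp [Matrix.det_fin_two_of])
  convert h3 using 1
  simp only [← Matrix.mul_assoc]
  congr 1
  ext a b
  fin_cases a <;> fin_cases b <;> simp [Matrix.mul_apply, Fin.sum_univ_two]

lemma isWordUpToScale_of_mem_E2 (hker : ∀ x, ρ x = 0 → ∃ y, x = ϖ * y) (T : Subring F)
    (hT : ∀ r ∈ T, ∃ n x, φ ϖ ^ n * r = φ x) (u : SL2 F) (hu : u ∈ E2 T) :
    IsWordUpToScale ρ ϖ φ (u : Matrix (Fin 2) (Fin 2) F) := by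
  have h12 : ∀ r : F, (E12 r)⁻¹ = E12 (-r) := fun r => by
    rw [inv_eq_iff_mul_eq_one]
    refine Subtype.ext ?_
    rw [Matrix.SpecialLinearGroup.coe_mul]
    simp [E12, Matrix.one_fin_two]
  have h21 : ∀ r : F, (E21 r)⁻¹ = E21 (-r) := fun r => by
    rw [inv_eq_iff_mul_eq_one]
    refine Subtype.ext ?_
    rw [Matrix.SpecialLinearGroup.coe_mul]
    simp [E21, Matrix.one_fin_two]
  have gen : ∀ r ∈ T, ∀ y : SL2 F, IsWordUpToScale ρ ϖ φ (y : Matrix (Fin 2) (Fin 2) F) →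
      IsWordUpToScale ρ ϖ φ ((E12 r * y : SL2 F) : Matrix (Fin 2) (Fin 2) F) ∧
      IsWordUpToScale ρ ϖ φ ((E21 r * y : SL2 F) : Matrix (Fin 2) (Fin 2) F) := by
    intro r hr y hy
    obtain ⟨n, hx⟩ := hT r hr
    rw [Matrix.SpecialLinearGroup.coe_mul, Matrix.SpecialLinearGroup.coe_mul]
    exact ⟨IsWordUpToScale.E12_mul hker n r _ hx hy, IsWordUpToScale.E21_mul hker n r hx hy⟩
  refine Subgroup.closure_induction_left
    (p := fun (u : SL2 F) _ => IsWordUpToScale ρ ϖ φ (u : Matrix (Fin 2) (Fin 2) F)) ?_ ?_ ?_ hu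
  · exact ⟨0, 0, 1, Or.inl (by simp), by simp⟩
  · rintro x ⟨r, hr, rfl | rfl⟩ y _ hy
    · exact (gen r hr y hy).1
    · exact (gen r hr y hy).2
  · rintro x ⟨r, hr, rfl | rfl⟩ y _ hy
    · rw [h12]; exact (gen _ (T.neg_mem hr) y hy).1
    · rw [h21]; exact (gen _ (T.neg_mem hr) y hy).2

lemma pow_smul_cancel [IsDomain O] (hϖ0 : ϖ ≠ 0) (hϖ : ρ ϖ = 0)
    {x y : Matrix (Fin 2) (Fin 2) O} (hx : ∃ i j, ρ (x i j) ≠ 0) (hy : ∃ i j, ρ (y i j) ≠ 0)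
    {m n : ℕ} (h : ϖ ^ m • x = ϖ ^ n • y) : x = y := by
  have key : ∀ (x y : Matrix (Fin 2) (Fin 2) O) (m n : ℕ), m ≤ n → (∃ i j, ρ (x i j) ≠ 0) →
      ϖ ^ m • x = ϖ ^ n • y → x = y := by
    intro x y m n hmn hx h
    obtain ⟨d, rfl⟩ := Nat.exists_eq_add_of_le hmn
    have hent : ∀ i j, x i j = ϖ ^ d * y i j := fun i j => by
      have := congrFun (congrFun h i) j
      simp only [Matrix.smul_apply, smul_eq_mul, pow_add, mul_assoc] at this
      exact mul_left_cancel₀ (pow_ne_zero _ hϖ0) this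
    rcases d with _ | d
    · ext i j; simp [hent]
    · obtain ⟨i, j, hij⟩ := hx
      exact absurd (by rw [hent, map_mul, map_pow, hϖ]; simp) hij
  rcases le_total m n with hmn | hmn
  · exact key x y m n hmn hx h
  · exact (key y x n m hmn hy h.symm).symm

/-- The leading matrix along `ϖ` of a product of elementary matrices with a pole along `ϖ` has
column space spanned by a unimodular vector. For `1 + ϖ⁻¹ [[-ab, a²], [-b², ab]]` the column space
is spanned by `(a, b)`, so over a local residue ring `A` one of `a`, `b` must divide the other. -/
lemma dvd_or_dvd_of_mem_E2 [IsDomain O] [IsDomain A] [IsLocalRing A]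
    (hϖ0 : ϖ ≠ 0) (hϖ : ρ ϖ = 0) (hker : ∀ x, ρ x = 0 → ∃ y, x = ϖ * y)
    (hφ : Function.Injective φ) (T : Subring F)
    (hT : ∀ r ∈ T, ∃ n x, φ ϖ ^ n * r = φ x) (a b : O) (ha : ρ a ≠ 0)
    (u : SL2 F) (hu : u ∈ E2 T)
    (huM : φ ϖ • (u : Matrix (Fin 2) (Fin 2) F)
      = φ.mapMatrix !![ϖ - a * b, a ^ 2; -b ^ 2, ϖ + a * b]) :
    ρ a ∣ ρ b ∨ ρ b ∣ ρ a := by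
  obtain ⟨i, j, m, hm, h⟩ := isWordUpToScale_of_mem_E2 hker T hT u hu
  set N : Matrix (Fin 2) (Fin 2) O := !![ϖ - a * b, a ^ 2; -b ^ 2, ϖ + a * b] with hN
  have hNe : ∃ i j, ρ (N i j) ≠ 0 := ⟨0, 1, by simp [hN, ha]⟩
  have hme : ∃ i j, ρ (m i j) ≠ 0 := by
    rcases hm with hm | ⟨k, t, hk, ht, rfl⟩
    · obtain ⟨j, hj⟩ := (ReducedTail.base (ρ := ρ) (ϖ := ϖ) m hm).exists_ne_zero hϖ
      exact ⟨1, j, hj⟩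
    · obtain ⟨j, hj⟩ := ht.exists_ne_zero hϖ
      have hkt : ∀ i, ρ ((k * swapMat ϖ * t) i j) = ρ (k i 0) * ρ (t 1 j) := fun i => by
        simp [swapMat, Matrix.mul_apply, Fin.sum_univ_two, hϖ]
      by_contra! hcon
      have h0 : ∀ i, ρ (k i 0) = 0 := fun i => by
        have := hcon i j
        rw [hkt] at this
        exact (mul_eq_zero.mp this).resolve_right hj
      have := congrArg ρ hk
      rw [Matrix.det_fin_two] at this
      simp [h0] at this
  have hEq : ϖ ^ i • N = ϖ ^ (j + 1) • m := by
    have h' : φ.mapMatrix (ϖ ^ i • N) = φ.mapMatrix (ϖ ^ (j + 1) • m) := by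
      have e : ∀ (n : ℕ) (x : Matrix (Fin 2) (Fin 2) O),
          φ.mapMatrix (ϖ ^ n • x) = φ ϖ ^ n • φ.mapMatrix x := fun n x => by
        ext a b; simp
      rw [e, e, ← huM, smul_comm, h, smul_smul, pow_succ']
    ext p q
    exact hφ (congrFun (congrFun h' p) q)
  have hNm : N = m := pow_smul_cancel hϖ0 hϖ hNe hme hEq
  rcases hm with hm | ⟨k, t, hk, ht, rfl⟩
  · exfalso
    have := congrArg ρ hm
    rw [← hNm, hN, Matrix.det_fin_two_of] at this
    simp only [map_sub, map_add, map_mul, map_neg, map_pow, hϖ, map_one] at this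
    exact one_ne_zero (α := A) (by rw [← this]; ring)
  · have e0 := congrArg ρ (congrFun (congrFun hNm 0) 1)
    have e1 := congrArg ρ (congrFun (congrFun hNm 1) 1)
    simp [hN, swapMat, Matrix.mul_apply, Fin.sum_univ_two, hϖ] at e0 e1
    have hab : ρ a * ρ (k 1 0) = ρ b * ρ (k 0 0) :=
      mul_left_cancel₀ ha (by linear_combination ρ (k 1 0) * e0 - ρ (k 0 0) * e1)
    have hdet := congrArg ρ hk
    rw [Matrix.det_fin_two, map_sub, map_mul, map_mul, map_one] at hdet
    have hunit : IsUnit (ρ (k 0 0)) ∨ IsUnit (ρ (k 1 0)) := by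
      rcases IsLocalRing.isUnit_or_isUnit_of_add_one
        (a := ρ (k 0 0) * ρ (k 1 1)) (b := -(ρ (k 0 1) * ρ (k 1 0)))
        (by rw [← hdet]; ring) with h | h
      · exact Or.inl (isUnit_of_mul_isUnit_left h)
      · exact Or.inr (isUnit_of_mul_isUnit_right ((IsUnit.neg_iff _).mp h))
    rcases hunit with h | h
    · exact Or.inl (h.dvd_mul_right.mp ⟨_, hab.symm⟩)
    · exact Or.inr (h.dvd_mul_right.mp ⟨_, hab⟩)

end ReducedWords

/-! ### Rational functions near a point at infinity -/

section AtInfinity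

open Polynomial

variable {B F : Type*} [CommRing B] [Field F]

/-- For `ι : B[X] → F`, the homomorphism `B[X] → F` that agrees with `ι` on constants and sends
the variable to `(ι X)⁻¹`. -/
def invEval (ι : B[X] →+* F) : B[X] →+* F :=
  Polynomial.eval₂RingHom (ι.comp Polynomial.C) (ι X)⁻¹

lemma pow_mul_invEval_reverse (ι : B[X] →+* F) (hX : ι X ≠ 0) (p : B[X]) :
    ι p = ι X ^ p.natDegree * invEval ι p.reverse := by
  let : Invertible (ι X) := invertibleOfNonzero hX
  have h := Polynomial.eval₂_reverse_mul_pow (ι.comp Polynomial.C) (ι X) p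
  rw [invOf_eq_inv, ← Polynomial.hom_eval₂, Polynomial.eval₂_C_X] at h
  rw [← h, mul_comm]
  rfl

lemma invEval_injective (ι : B[X] →+* F) (hι : Function.Injective ι) (hX : ι X ≠ 0) :
    Function.Injective (invEval ι) := by
  rw [injective_iff_map_eq_zero]
  intro p hp
  -- The reverse of `p` at `X` is `X ^ deg p` times `p` at `X⁻¹`, hence vanishes as well.
  let : Invertible (ι X)⁻¹ := invertibleOfNonzero (inv_ne_zero hX)
  have h := Polynomial.eval₂_reverse_mul_pow (ι.comp Polynomial.C) (ι X)⁻¹ p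
  rw [invOf_eq_inv, inv_inv, ← Polynomial.hom_eval₂, Polynomial.eval₂_C_X] at h
  have h0 : ι p.reverse * (ι X)⁻¹ ^ p.natDegree = 0 := h.trans hp
  have h1 : ι p.reverse = 0 :=
    (mul_eq_zero.mp h0).resolve_right (pow_ne_zero _ (inv_ne_zero hX))
  exact Polynomial.reverse_eq_zero.mp (hι (h1.trans (map_zero ι).symm))

/-- The ring `ι(Q)[1/ι(f)]` of fractions whose denominator is a power of `f`, as a subring of
`F`. -/
def awaySubring {Q : Type*} [CommRing Q] (ι : Q →+* F) (f : Q) : Subring F where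
  carrier := {x | ∃ (n : ℕ) (p : Q), ι f ^ n * x = ι p}
  mul_mem' := by
    rintro x y ⟨n, p, hp⟩ ⟨m, q, hq⟩
    exact ⟨n + m, p * q, by rw [map_mul, ← hp, ← hq]; ring⟩
  one_mem' := ⟨0, 1, by simp⟩
  add_mem' := by
    rintro x y ⟨n, p, hp⟩ ⟨m, q, hq⟩
    exact ⟨n + m, f ^ m * p + f ^ n * q, by
      rw [map_add, map_mul, map_mul, ← hp, ← hq, map_pow, map_pow]; ring⟩
  zero_mem' := ⟨0, 0, by simp⟩
  neg_mem' := by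
    rintro x ⟨n, p, hp⟩
    exact ⟨n, -p, by rw [map_neg, ← hp]; ring⟩

lemma not_dvd_atPrime [IsDomain B] (𝔭 : Ideal B) [𝔭.IsPrime] (a b : B)
    (h : ∀ d ∉ 𝔭, ¬ a ∣ d * b) :
    ¬ algebraMap B (Localization.AtPrime 𝔭) a ∣ algebraMap B (Localization.AtPrime 𝔭) b := by
  rintro ⟨y, hy⟩
  obtain ⟨⟨c, d⟩, hcd⟩ := IsLocalization.surj 𝔭.primeCompl y
  simp only at hcd
  refine h d d.2 ⟨c, ?_⟩
  apply IsLocalization.injective (Localization.AtPrime 𝔭) 𝔭.primeCompl_le_nonZeroDivisors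
  rw [map_mul, map_mul, hy, ← hcd]
  ring

/-- With `X` the variable, `1 + X [[-ab, a²], [-b², ab]]` is not a product of elementary matrices
over `B[X][1/f]`. The relevant ring is the localization of `B[X⁻¹]` at the prime generated by
`X⁻¹` and `𝔭`: it contains `B[X][1/f]` after inverting `X⁻¹`, as the leading coefficient of `f`
is not in `𝔭`, and its quotient by `X⁻¹` is the localization of `B` at `𝔭`. -/
lemma not_mem_E2_awaySubring [IsDomain B] (ι : B[X] →+* F) (hι : Function.Injective ι)
    (𝔭 : Ideal B) [𝔭.IsPrime] (f : B[X]) (hf : f.leadingCoeff ∉ 𝔭) (a b : B) (ha : a ≠ 0)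
    (hab : ∀ d ∉ 𝔭, ¬ a ∣ d * b) (hba : ∀ d ∉ 𝔭, ¬ b ∣ d * a)
    (u : SL2 F)
    (hu : (u : Matrix (Fin 2) (Fin 2) F) = ι.mapMatrix
      !![1 - X * C (a * b), X * C (a ^ 2); -(X * C (b ^ 2)), 1 + X * C (a * b)]) :
    u ∉ E2 (awaySubring ι f) := by
  intro hmem
  have hX : ι X ≠ 0 := (map_ne_zero_iff ι hι).mpr Polynomial.X_ne_zero
  let P : Ideal B[X] := 𝔭.comap Polynomial.constantCoeff
  have hjinj := invEval_injective ι hι hX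
  have hunits : ∀ y : P.primeCompl, IsUnit (invEval ι y) := fun y => by
    refine IsUnit.mk0 _ ((map_ne_zero_iff _ hjinj).mpr ?_)
    rintro h0
    exact y.2 (by rw [h0]; exact P.zero_mem)
  let φ : Localization.AtPrime P →+* F := IsLocalization.lift (M := P.primeCompl) hunits
  let ρ : Localization.AtPrime P →+* Localization.AtPrime 𝔭 :=
    Localization.localRingHom P 𝔭 Polynomial.constantCoeff rfl
  have hφ_map : ∀ p, φ (algebraMap B[X] _ p) = invEval ι p := fun p =>
    IsLocalization.lift_eq hunits p
  have hρ_map : ∀ p, ρ (algebraMap B[X] _ p) = algebraMap B _ (p.coeff 0) := fun p =>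
    Localization.localRingHom_to_map P 𝔭 Polynomial.constantCoeff rfl p
  have hPle := P.primeCompl_le_nonZeroDivisors
  have hle := 𝔭.primeCompl_le_nonZeroDivisors
  have hinjP := IsLocalization.injective (Localization.AtPrime P) hPle
  have hinj := IsLocalization.injective (Localization.AtPrime 𝔭) hle
  have : IsDomain (Localization.AtPrime P) := IsLocalization.isDomain_of_le_nonZeroDivisors _ hPle
  have : IsDomain (Localization.AtPrime 𝔭) := IsLocalization.isDomain_of_le_nonZeroDivisors _ hle
  have hφ : Function.Injective φ := by
    rw [injective_iff_map_eq_zero]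
    intro x hx
    obtain ⟨⟨p, q⟩, hpq⟩ := IsLocalization.surj P.primeCompl x
    simp only at hpq
    have h1 : invEval ι p = 0 := by rw [← hφ_map, ← hpq, map_mul, hx, zero_mul]
    have h2 : p = 0 := hjinj (h1.trans (map_zero _).symm)
    rw [h2, map_zero] at hpq
    exact (mul_eq_zero.mp hpq).resolve_right
      (IsLocalization.map_units (Localization.AtPrime P) q).ne_zero
  have hker : ∀ x, ρ x = 0 → ∃ y, x = algebraMap B[X] (Localization.AtPrime P) X * y := by
    intro x hx
    obtain ⟨⟨p, q⟩, hpq⟩ := IsLocalization.surj P.primeCompl x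
    simp only at hpq
    have h1 : p.coeff 0 = 0 := by
      apply hinj
      rw [← hρ_map, ← hpq, map_mul, hx, zero_mul, map_zero]
    obtain ⟨p', rfl⟩ := Polynomial.X_dvd_iff.mpr h1
    obtain ⟨v, hv⟩ := IsLocalization.map_units (Localization.AtPrime P) q
    refine ⟨algebraMap B[X] _ p' * (v⁻¹ : (Localization.AtPrime P)ˣ), ?_⟩
    rw [← hv] at hpq
    rw [← mul_assoc, ← map_mul, ← hpq, Units.mul_inv_cancel_right]
  have hφX : φ (algebraMap B[X] _ X) = (ι X)⁻¹ := by
    rw [hφ_map]; simp [invEval]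
  have hφC : ∀ c : B, φ (algebraMap B[X] _ (C c)) = ι (C c) := fun c => by
    rw [hφ_map]; simp [invEval]
  have hT : ∀ r ∈ awaySubring ι f, ∃ n x,
      φ (algebraMap B[X] (Localization.AtPrime P) X) ^ n * r = φ x := by
    rintro r ⟨n, p, hp⟩
    have hfP : f.reverse ∈ P.primeCompl := fun h => hf (by
      have : f.reverse.coeff 0 ∈ 𝔭 := h
      rwa [Polynomial.coeff_zero_reverse] at this)
    obtain ⟨v, hv⟩ := IsLocalization.map_units (Localization.AtPrime P) ⟨_, hfP⟩
    simp only at hv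
    rw [pow_mul_invEval_reverse ι hX f, pow_mul_invEval_reverse ι hX p, ← hφ_map, ← hφ_map,
      ← hv] at hp
    have hvinv : φ (v : Localization.AtPrime P) * φ ((v⁻¹ : (Localization.AtPrime P)ˣ)) = 1 := by
      rw [← map_mul, Units.mul_inv, map_one]
    refine ⟨p.natDegree, algebraMap B[X] _ X ^ (f.natDegree * n) *
      (v⁻¹ : (Localization.AtPrime P)ˣ) ^ n * algebraMap B[X] _ p.reverse, ?_⟩
    simp only [map_mul, map_pow, hφX]
    set z := φ ((v⁻¹ : (Localization.AtPrime P)ˣ) : Localization.AtPrime P)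
    set w := φ (v : Localization.AtPrime P)
    set y := φ (algebraMap B[X] (Localization.AtPrime P) p.reverse)
    have hwz : w ^ n * z ^ n = 1 := by rw [← mul_pow, hvinv, one_pow]
    have hp' : ι X ^ (f.natDegree * n) * w ^ n * r = ι X ^ p.natDegree * y := by
      rw [← hp, mul_pow, pow_mul]
    rw [inv_pow, inv_pow, inv_mul_eq_iff_eq_mul₀ (pow_ne_zero _ hX)]
    have hs : ι X ^ (f.natDegree * n) ≠ 0 := pow_ne_zero _ hX
    field_simp
    linear_combination z ^ n * hp' - ι X ^ (f.natDegree * n) * r * hwz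
  have hfin := dvd_or_dvd_of_mem_E2 (ρ := ρ) (φ := φ)
    (ϖ := algebraMap B[X] (Localization.AtPrime P) X)
    ((map_ne_zero_iff _ hinjP).mpr Polynomial.X_ne_zero) (by rw [hρ_map]; simp) hker hφ
    (awaySubring ι f) hT (algebraMap B[X] _ (C a)) (algebraMap B[X] _ (C b))
    (by rw [hρ_map]; simpa using (map_ne_zero_iff _ hinj).mpr ha) u hmem (by
      rw [hu]
      ext i j
      fin_cases i <;> fin_cases j <;> simp [hφX, hφC] <;> field_simp)
  simp only [hρ_map, Polynomial.coeff_C_zero] at hfin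
  rcases hfin with h | h
  · exact not_dvd_atPrime 𝔭 a b hab h
  · exact not_dvd_atPrime 𝔭 b a hba h

end AtInfinity

/-! ### Choosing the denominator, the prime and the point -/

/-- Every matrix in `SL₂(F)` is a product of elementary matrices, with finitely many entries
involved. -/
lemma exists_finset_mem_E2 {F : Type*} [Field F] (g : SL2 F) :
    ∃ t : Finset F, ∀ T : Subring F, (∀ x ∈ t, x ∈ T) → g ∈ E2 T := by
  classical
  have h12 : ∀ (T : Subring F) (r : F), r ∈ T → E12 r ∈ E2 T := fun T r hr =>
    Subgroup.subset_closure ⟨r, hr, Or.inl rfl⟩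
  have h21 : ∀ (T : Subring F) (r : F), r ∈ T → E21 r ∈ E2 T := fun T r hr =>
    Subgroup.subset_closure ⟨r, hr, Or.inr rfl⟩
  have key : ∀ g : SL2 F, g.1 1 0 ≠ 0 →
      ∃ t : Finset F, ∀ T : Subring F, (∀ x ∈ t, x ∈ T) → g ∈ E2 T := by
    intro g hc
    refine ⟨{(g.1 0 0 - 1) / g.1 1 0, g.1 1 0, (g.1 1 1 - 1) / g.1 1 0}, fun T hT => ?_⟩
    have hg : g = E12 ((g.1 0 0 - 1) / g.1 1 0) * E21 (g.1 1 0) *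
        E12 ((g.1 1 1 - 1) / g.1 1 0) := by
      have hdet := g.2
      rw [Matrix.det_fin_two] at hdet
      refine Subtype.ext ?_
      rw [Matrix.SpecialLinearGroup.coe_mul, Matrix.SpecialLinearGroup.coe_mul]
      ext i j
      fin_cases i <;> fin_cases j <;>
        simp [E12, E21, Matrix.mul_apply, Fin.sum_univ_two] <;> field_simp
      · ring
      · linear_combination -hdet
      · ring
    rw [hg]
    exact mul_mem (mul_mem (h12 T _ (hT _ (by simp))) (h21 T _ (hT _ (by simp))))
      (h12 T _ (hT _ (by simp)))
  by_cases hc : g.1 1 0 = 0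
  · -- A lower-left entry `0` becomes nonzero after a row operation.
    have ha : g.1 0 0 ≠ 0 := by
      intro h0
      have hdet := g.2
      rw [Matrix.det_fin_two, h0, hc] at hdet
      simp at hdet
    obtain ⟨t, ht⟩ := key (E21 1 * g) (by
      have : (E21 1 * g).1 1 0 = g.1 0 0 := by
        change ((!![1, 0; 1, 1] : Matrix (Fin 2) (Fin 2) F) * g.1) 1 0 = g.1 0 0
        simp [Matrix.mul_apply, Fin.sum_univ_two, hc]
      rwa [this])
    refine ⟨t, fun T hT => ?_⟩
    have := mul_mem (inv_mem (h21 T 1 T.one_mem)) (ht T hT)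
    rwa [inv_mul_cancel_left] at this
  · exact key g hc

lemma E2_mono {F : Type*} [Field F] {T T' : Subring F} (h : T ≤ T') : E2 T ≤ E2 T' :=
  Subgroup.closure_mono fun _ ⟨r, hr, hg⟩ => ⟨r, h hr, hg⟩

/-- A nonzero element of a Noetherian domain has only finitely many pairwise non-associate prime
divisors, since it is a product of irreducibles. -/
lemma exists_prime_not_dvd {R₀ : Type*} [CommRing R₀] [IsDomain R₀] [IsNoetherianRing R₀]
    {P : Set R₀} (hinf : P.Infinite) (hprime : ∀ p ∈ P, Prime p)
    (hnon : P.Pairwise fun p q => ¬ Associated p q) {e : R₀} (he : e ≠ 0) :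
    ∃ p ∈ P, ¬ p ∣ e := by
  classical
  by_contra! hcon
  obtain ⟨s, hs, hse⟩ := WfDvdMonoid.exists_factors e he
  have hq : ∀ p ∈ P, ∃ q ∈ s, Associated p q := fun p hp => by
    obtain ⟨q, hqs, hpq⟩ := (hprime p hp).exists_mem_multiset_dvd
      ((hcon p hp).trans hse.symm.dvd)
    exact ⟨q, hqs, ((hprime p hp).irreducible.dvd_irreducible_iff_associated (hs q hqs)).mp hpq⟩
  choose! q hqs hpq using hq
  refine hinf (Set.Finite.of_injOn (f := q) (t := (s.toFinset : Set R₀)) ?_ ?_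
    (Finset.finite_toSet _))
  · intro p hp
    simpa using hqs p hp
  · intro p hp p' hp' h
    by_contra hne
    exact hnon hp hp' hne ((hpq p hp).trans (h ▸ (hpq p' hp').symm))

lemma exists_mem_awaySubring {Q F : Type*} [CommRing Q] [IsDomain Q] [Field F] [Algebra Q F]
    [IsFractionRing Q F] (t : Finset F) :
    ∃ f : Q, f ≠ 0 ∧ ∀ x ∈ t, x ∈ awaySubring (algebraMap Q F) f := by
  obtain ⟨f, hf⟩ := IsLocalization.exist_integer_multiples_of_finset (nonZeroDivisors Q) t
  refine ⟨f, nonZeroDivisors.coe_ne_zero f, fun x hx => ?_⟩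
  obtain ⟨p, hp⟩ := hf x hx
  exact ⟨1, p, by rw [hp, pow_one]; exact (Algebra.smul_def _ _).symm⟩

/-- For every nonzero `f ∈ R₀[s, t]` some matrix in `SL₂(R₀[s, t])` is not a product of elementary
matrices over `R₀[s, t][1/f]`. -/
lemma exists_not_mem_E2_awaySubring {R₀ F : Type*} [CommRing R₀] [IsDomain R₀]
    [IsNoetherianRing R₀] [Field F]
    (hprimes : ∃ P : Set R₀, P.Infinite ∧ (∀ p ∈ P, Prime p) ∧
      P.Pairwise fun p q => ¬ Associated p q)
    (κ : MvPolynomial (Fin 2) R₀ →+* F) (hκ : Function.Injective κ)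
    (f : MvPolynomial (Fin 2) R₀) (hf : f ≠ 0) :
    ∃ M : SL2 (MvPolynomial (Fin 2) R₀),
      Matrix.SpecialLinearGroup.map κ M ∉ E2 (awaySubring κ f) := by
  obtain ⟨P, hinf, hprime, hnon⟩ := hprimes
  have : Infinite R₀ := Set.infinite_univ_iff.mp (hinf.mono (Set.subset_univ _))
  -- `R₀[s, t]` is viewed as `B[s]` with `B = R₀[t]`.
  let e := (MvPolynomial.finSuccEquiv R₀ 1).toRingEquiv
  set g := e f with hg
  have hg0 : g.leadingCoeff ≠ 0 := by
    rw [Polynomial.leadingCoeff_ne_zero, hg]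
    exact (map_ne_zero_iff e e.injective).mpr hf
  obtain ⟨c, hc⟩ : ∃ c : Fin 1 → R₀, MvPolynomial.eval c g.leadingCoeff ≠ 0 := by
    by_contra! hcon
    exact hg0 (MvPolynomial.funext fun c => by rw [hcon c, map_zero])
  obtain ⟨p, hpP, hpc⟩ := exists_prime_not_dvd hinf hprime hnon hc
  have hp := hprime p hpP
  have hspan : (Ideal.span {p}).IsPrime := (Ideal.span_singleton_prime hp.ne_zero).mpr hp
  -- The prime ideal `(p, t - c)` of `B`.
  let 𝔭 : Ideal (MvPolynomial (Fin 1) R₀) := (Ideal.span {p}).comap (MvPolynomial.eval c)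
  have hmem : ∀ d, d ∈ 𝔭 ↔ p ∣ MvPolynomial.eval c d := fun d => by
    rw [Ideal.mem_comap, Ideal.mem_span_singleton]
  let a : MvPolynomial (Fin 1) R₀ := MvPolynomial.C p
  let b : MvPolynomial (Fin 1) R₀ := MvPolynomial.X 0 - MvPolynomial.C (c 0)
  have ha : a ≠ 0 := ((MvPolynomial.prime_C_iff (Fin 1)).mpr hp).ne_zero
  have hab : ∀ d ∉ 𝔭, ¬ a ∣ d * b := by
    intro d hd hdvd
    rcases ((MvPolynomial.prime_C_iff (Fin 1)).mpr hp).dvd_or_dvd hdvd with h | h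
    · refine hd ((hmem d).mpr ?_)
      simpa using map_dvd (MvPolynomial.eval c) h
    · have h1 := map_dvd (MvPolynomial.eval (c + 1)) h
      simp [b] at h1
      exact hp.not_isUnit (isUnit_of_dvd_one (by simpa using h1))
  have hba : ∀ d ∉ 𝔭, ¬ b ∣ d * a := by
    intro d hd hdvd
    have h1 := map_dvd (MvPolynomial.eval c) hdvd
    simp only [b, a, map_sub, map_mul, MvPolynomial.eval_X, MvPolynomial.eval_C, sub_self,
      zero_dvd_iff, mul_eq_zero, hp.ne_zero, or_false] at h1
    exact hd ((hmem d).mpr (h1 ▸ dvd_zero p))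
  let M : SL2 (Polynomial (MvPolynomial (Fin 1) R₀)) :=
    ⟨!![1 - .X * .C (a * b), .X * .C (a ^ 2); -(.X * .C (b ^ 2)), 1 + .X * .C (a * b)], by
      rw [Matrix.det_fin_two_of]
      simp only [map_mul, map_pow]
      ring⟩
  let ι : Polynomial (MvPolynomial (Fin 1) R₀) →+* F := κ.comp (e.symm : _ →+* _)
  refine ⟨Matrix.SpecialLinearGroup.map (e.symm : _ →+* _) M, fun hcon => ?_⟩
  refine not_mem_E2_awaySubring ι (hκ.comp e.symm.injective) 𝔭 g
    (fun h => hpc ((hmem _).mp h)) a b ha hab hba _ ?_ (E2_mono ?_ hcon)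
  · ext i j
    rfl
  · rintro x ⟨n, q, hq⟩
    refine ⟨n, e q, ?_⟩
    simpa [ι, hg] using hq

/-- Let `R₀` be a finitely generated integral domain with infinitely many
pairwise non-associate primes, `R = R₀[s,t]`, `F = Frac(R)`, and `S` a finitely generated
`R`-subalgebra of `F`. Then every generating set `L` of `SL₂(S)` contains infinitely many
elements outside `E₂(S)`. -/
theorem statement19 (R₀ : Type*) [CommRing R₀] [IsDomain R₀] [Algebra.FiniteType ℤ R₀]
    (hprimes : ∃ P : Set R₀, P.Infinite ∧ (∀ p ∈ P, Prime p) ∧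
      P.Pairwise fun p q => ¬ Associated p q)
    (S : Subalgebra (MvPolynomial (Fin 2) R₀) (FractionRing (MvPolynomial (Fin 2) R₀)))
    (hS : S.FG)
    (L : Set (SL2 (FractionRing (MvPolynomial (Fin 2) R₀))))
    (hL : L ⊆ ↑(SL2In S.toSubring))
    (hgen : Subgroup.closure L = SL2In S.toSubring) :
    {x ∈ L | x ∉ E2 S.toSubring}.Infinite := by
  have : IsNoetherianRing R₀ := Algebra.FiniteType.isNoetherianRing ℤ R₀
  classical
  intro hfin
  obtain ⟨s, hs⟩ := hS
  choose t ht using exists_finset_mem_E2 (F := FractionRing (MvPolynomial (Fin 2) R₀))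
  -- One denominator `f` serves the generators of `S` and the exceptional elements of `L`.
  obtain ⟨f, hf0, hf⟩ := exists_mem_awaySubring (Q := MvPolynomial (Fin 2) R₀)
    (s ∪ hfin.toFinset.biUnion t)
  set T := awaySubring (algebraMap (MvPolynomial (Fin 2) R₀)
    (FractionRing (MvPolynomial (Fin 2) R₀))) f with hT
  have hST : S.toSubring ≤ T := by
    intro x hx
    have hx' : x ∈ Algebra.adjoin (MvPolynomial (Fin 2) R₀)
        (s : Set (FractionRing (MvPolynomial (Fin 2) R₀))) := by rw [hs]; exact hx
    clear hx
    induction hx' using Algebra.adjoin_induction with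
    | mem x hx => exact hf x (Finset.mem_union_left _ hx)
    | algebraMap r => exact ⟨0, r, by simp⟩
    | add x y hx hy ihx ihy => exact T.add_mem ihx ihy
    | mul x y hx hy ihx ihy => exact T.mul_mem ihx ihy
  have hLT : SL2In S.toSubring ≤ E2 T := by
    rw [← hgen, Subgroup.closure_le]
    intro x hx
    by_cases hxE : x ∈ E2 S.toSubring
    · exact E2_mono hST hxE
    · refine ht x T fun y hy => hf y (Finset.mem_union_right _ ?_)
      exact Finset.mem_biUnion.mpr ⟨x, hfin.mem_toFinset.mpr ⟨hx, hxE⟩, hy⟩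
  obtain ⟨M, hM⟩ := exists_not_mem_E2_awaySubring hprimes
    (algebraMap (MvPolynomial (Fin 2) R₀) (FractionRing (MvPolynomial (Fin 2) R₀)))
    (IsFractionRing.injective _ _) f hf0
  refine hM (hLT ⟨Matrix.SpecialLinearGroup.map ((algebraMap (MvPolynomial (Fin 2) R₀)
    (FractionRing (MvPolynomial (Fin 2) R₀))).codRestrict S.toSubring
      fun r => S.algebraMap_mem r) M, ?_⟩)
  ext i j
  rfl
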